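/- Let μ and ν be Borel probability measures on ℝ with CDFs F_μ, F_ν and quantile functions Q_μ, Q_ν. If ∫⁻_{q ∈ (0,1)} ENNReal.ofReal( max( Q_ν(q) − Q_μ(q), 0 ) ) dq = 0 (Lebesgue measure on (0,1)), then F_μ(x) ≤ F_ν(x) for all x ∈ ℝ, i.e., μ first-order stochastically dominates ν. -/

import Mathlib

/-!
If `F_ν x < F_μ x` for some `x`, right-continuity of `F_ν` gives `y > x` with `F_ν y < F_μ x`.
Every level `q` strictly between these two values has `Q_μ q ≤ x` (`quantileFn_le`) and
`y ≤ Q_ν q` (`le_quantileFn`), so the violation is at least `y - x > 0` on an interval of positive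
length and its integral cannot vanish. Bounding the integral from below by that of a constant
avoids any measurability argument for the quantile functions.
-/

open MeasureTheory Set

/-- The cumulative distribution function of a Borel measure on ℝ:
`F_μ(x) = μ((-∞, x])`. -/
noncomputable def cdfFn (μ : Measure ℝ) (x : ℝ) : ℝ := (μ (Iic x)).toReal

/-- The quantile function (generalized inverse of the CDF):
`Q_μ(p) = sInf { x | p ≤ F_μ(x) }`. -/
noncomputable def quantileFn (μ : Measure ℝ) (p : ℝ) : ℝ := sInf { x : ℝ | p ≤ cdfFn μ x }

theorem cdfFn_eq_cdf (μ : Measure ℝ) [IsProbabilityMeasure μ] : cdfFn μ = ProbabilityTheory.cdf μ :=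
  funext fun x => (ProbabilityTheory.cdf_eq_real μ x).symm

/-- Positivity of `q` makes the set defining the quantile bounded below, so that `sInf` does not
take its junk value. -/
theorem quantileFn_le (μ : Measure ℝ) [IsProbabilityMeasure μ] {q x : ℝ} (hq : 0 < q)
    (hx : q ≤ cdfFn μ x) : quantileFn μ q ≤ x := by
  refine csInf_le ?_ hx
  obtain ⟨a, ha⟩ := ((ProbabilityTheory.tendsto_cdf_atBot μ).eventually_lt_const hq).exists
  refine ⟨a, fun z hz => ?_⟩
  rw [mem_ofPred_eq, cdfFn_eq_cdf] at hz
  exact ((ProbabilityTheory.monotone_cdf μ).reflect_lt (ha.trans_le hz)).le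

/-- The bound `q < 1` makes the set defining the quantile nonempty, so that `sInf` does not take
its junk value. -/
theorem le_quantileFn (μ : Measure ℝ) [IsProbabilityMeasure μ] {q y : ℝ} (hq : q < 1)
    (hy : cdfFn μ y < q) : y ≤ quantileFn μ q := by
  rw [cdfFn_eq_cdf] at hy
  obtain ⟨b, hb⟩ := ((ProbabilityTheory.tendsto_cdf_atTop μ).eventually_const_lt hq).exists
  refine le_csInf ⟨b, ?_⟩ fun z hz => ?_
  · rw [mem_ofPred_eq, cdfFn_eq_cdf]
    exact hb.le
  · rw [mem_ofPred_eq, cdfFn_eq_cdf] at hz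
    exact ((ProbabilityTheory.monotone_cdf μ).reflect_lt (hy.trans_le hz)).le

theorem fsd_of_zero_fsd_violation
    (μ ν : Measure ℝ) [IsProbabilityMeasure μ] [IsProbabilityMeasure ν]
    (h0 : (∫⁻ q in Ioo (0:ℝ) 1,
        ENNReal.ofReal (max (quantileFn ν q - quantileFn μ q) 0)) = 0) :
    ∀ x : ℝ, cdfFn μ x ≤ cdfFn ν x := by
  intro x
  by_contra! hx
  obtain ⟨y, hxy, hy⟩ : ∃ y, x < y ∧ cdfFn ν y < cdfFn μ x := by
    have hc := ((ProbabilityTheory.cdf ν).right_continuous x).mono Ioi_subset_Ici_self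
    rw [cdfFn_eq_cdf ν] at hx ⊢
    obtain ⟨y, hy, hxy⟩ :=
      ((hc.eventually_lt_const hx).and self_mem_nhdsWithin).exists
    exact ⟨y, hxy, hy⟩
  have hν : 0 ≤ cdfFn ν y := ENNReal.toReal_nonneg
  have hμ : cdfFn μ x ≤ 1 := by
    rw [cdfFn_eq_cdf]
    exact ProbabilityTheory.cdf_le_one μ x
  have hle : ENNReal.ofReal (y - x) * volume (Ioo (cdfFn ν y) (cdfFn μ x)) ≤ 0 := by
    rw [← h0, ← setLIntegral_const]
    refine (setLIntegral_mono' measurableSet_Ioo fun q hq => ?_).trans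
      (lintegral_mono_set (Ioo_subset_Ioo hν hμ))
    have h1 := quantileFn_le μ (hν.trans_lt hq.1) hq.2.le
    have h2 := le_quantileFn ν (hq.2.trans_le hμ) hq.1
    exact ENNReal.ofReal_le_ofReal (le_max_of_le_left (by linarith))
  rw [Real.volume_Ioo] at hle
  exact hle.not_gt (ENNReal.mul_pos (by simpa using hxy) (by simpa using hy))
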